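/- arXiv:1604.03206 — 5 statements merged into one kernel-verified Lean document; each statement's English description precedes it below -/
import Mathlib

section
/- Let the symmetric group S_n act on the set P_n of partial permutations of {1,…,n} by v·(E,f) = (vE, v∘f∘v⁻¹). Two partial permutations (E₁,f₁) and (E₂,f₂) lie in the same S_n-orbit if and only if |E₁| = |E₂| and f₁ and f₂ have the same cycle type (as permutations of {1,…,n}). -/
/-!
Conjugation preserves cardinality and cycle type. For the converse, equality of cycle types gives
`π` with `π * a.perm * π⁻¹ = b.perm`, but `π` may carry the support of `a` to a set `S` other than
the support `T` of `b`. Both `S` and `T` contain every point moved by `b.perm` and have the same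
size, so some permutation `w` maps `S` onto `T` while fixing those points. Such a `w` is disjoint
from `b.perm`, hence commutes with it, and `w * π` carries `a` to `b`.
-/

/-- A *partial permutation* of `{0, …, n-1}` (modeled as `Fin n`): a pair `(E, f)`
where `E` is a finite subset (the *support*) and `f` is a permutation fixing
every point outside `E`. -/
structure PartialPerm (n : ℕ) where
  support : Finset (Fin n)
  perm : Equiv.Perm (Fin n)
  fixes : ∀ x : Fin n, x ∉ support → perm x = x

namespace PartialPerm

theorem ext' {n : ℕ} {a b : PartialPerm n} (h1 : a.support = b.support)
    (h2 : a.perm = b.perm) : a = b := by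
  cases a; cases b; simp_all

/-- The monoid structure: `(E₁,f₁)·(E₂,f₂) = (E₁ ∪ E₂, f₁ ∘ f₂)`, with identity `(∅, id)`. -/
instance (n : ℕ) : Monoid (PartialPerm n) where
  mul a b := ⟨a.support ∪ b.support, a.perm * b.perm, fun x hx => by
    simp only [Finset.mem_union, not_or] at hx
    simp [Equiv.Perm.mul_apply, b.fixes x hx.2, a.fixes x hx.1]⟩
  one := ⟨∅, 1, fun _ _ => rfl⟩
  mul_assoc a b c := ext' (Finset.union_assoc _ _ _) (mul_assoc _ _ _)
  one_mul a := ext' (Finset.empty_union _) (one_mul _)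
  mul_one a := ext' (Finset.union_empty _) (mul_one _)

noncomputable instance (n : ℕ) : Fintype (PartialPerm n) :=
  Fintype.ofInjective (fun a => (a.support, a.perm))
    (fun _ _ h => ext' (congrArg Prod.fst h) (congrArg Prod.snd h))

/-- The conjugation action of `S_n` on partial permutations:
`v • (E, f) = (v E, v ∘ f ∘ v⁻¹)`. -/
def conj {n : ℕ} (v : Equiv.Perm (Fin n)) (a : PartialPerm n) : PartialPerm n :=
  ⟨a.support.image v, v * a.perm * v⁻¹, fun x hx => by
    have h : v.symm x ∉ a.support := fun hmem =>
      hx (Finset.mem_image.mpr ⟨v.symm x, hmem, v.apply_symm_apply x⟩)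
    simp [Equiv.Perm.mul_apply, Equiv.Perm.inv_def, a.fixes _ h]⟩

instance (n : ℕ) : SMul (Equiv.Perm (Fin n)) (PartialPerm n) := ⟨conj⟩

@[simp] theorem smul_support {n : ℕ} (v : Equiv.Perm (Fin n)) (a : PartialPerm n) :
    (v • a).support = a.support.image v := rfl

@[simp] theorem smul_perm {n : ℕ} (v : Equiv.Perm (Fin n)) (a : PartialPerm n) :
    (v • a).perm = v * a.perm * v⁻¹ := rfl

instance (n : ℕ) : MulAction (Equiv.Perm (Fin n)) (PartialPerm n) where
  one_smul a := ext' (by simp) (by simp)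
  mul_smul v w a := ext'
    (by rw [smul_support, smul_support, smul_support, Finset.image_image, ← Equiv.Perm.coe_mul])
    (by simp only [smul_perm]; group)

/-- The cycle type of a partial permutation `(E, f)`: the cycle lengths (≥ 2) of `f`,
together with one part `1` for each fixed point of `f` inside `E`.  It is a partition
of `|E|`. -/
def pCycleType {n : ℕ} (a : PartialPerm n) : Multiset ℕ :=
  a.perm.cycleType + Multiset.replicate (a.support.card - a.perm.support.card) 1

/-- `A Δ n` : the sum, in the monoid algebra `B_n = ℂ[P_n]`, of all partial
permutations of cycle type `Δ` (zero if there are none, e.g. when `|Δ| > n`). -/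
noncomputable def A (Δ : Multiset ℕ) (n : ℕ) : MonoidAlgebra ℂ (PartialPerm n) :=
  ∑ a : PartialPerm n, if pCycleType a = Δ then MonoidAlgebra.single a (1 : ℂ) else 0

end PartialPerm

/-- Two equinumerous finsets can be matched by a permutation fixing any given set of common
points. -/
theorem exists_perm_image_eq_of_card_eq {α : Type*} [Fintype α] [DecidableEq α]
    {S T U : Finset α} (hcard : S.card = T.card) (hS : U ⊆ S) (hT : U ⊆ T) :
    ∃ w : Equiv.Perm α, S.image w = T ∧ ∀ x ∈ U, w x = x := by
  obtain ⟨e, he⟩ := Finset.exists_equiv_extend_of_card_eq (α := {x // x ∈ S}) (t := T)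
    (by simpa using hcard) (s := Finset.univ.filter fun x => (x : α) ∈ U)
    (f := fun x => (x : α))
    (by
      intro x hx
      obtain ⟨y, hy, rfl⟩ := Finset.mem_image.1 hx
      exact hT (Finset.mem_filter.1 hy).2)
    Subtype.val_injective.injOn
  refine ⟨e.extendSubtype, ?_, fun x hx => ?_⟩
  · apply Finset.eq_of_subset_of_card_le
    · intro y hy
      obtain ⟨x, hx, rfl⟩ := Finset.mem_image.1 hy
      exact e.extendSubtype_mem x hx
    · rw [Finset.card_image_of_injective _ (Equiv.injective _), hcard]
  · rw [e.extendSubtype_apply_of_mem x (hS hx)]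
    exact he ⟨x, hS hx⟩ (by simpa using hx)

theorem PartialPerm.perm_support_subset {n : ℕ} (a : PartialPerm n) :
    a.perm.support ⊆ a.support := by
  intro x hx
  by_contra h
  exact Equiv.Perm.mem_support.1 hx (a.fixes x h)

open PartialPerm in
/-- two partial permutations lie in the same `S_n`-orbit (for the action
`v • (E,f) = (vE, v∘f∘v⁻¹)`) iff their supports have the same size and their
underlying permutations have the same cycle type. -/
theorem partialPerm_orbit_iff (n : ℕ) (a b : PartialPerm n) :
    (∃ v : Equiv.Perm (Fin n), v • a = b) ↔
      a.support.card = b.support.card ∧ a.perm.cycleType = b.perm.cycleType := by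
  constructor
  · rintro ⟨v, rfl⟩
    exact ⟨(Finset.card_image_of_injective _ v.injective).symm,
      by rw [smul_perm, Equiv.Perm.cycleType_conj]⟩
  · rintro ⟨hcard, htype⟩
    obtain ⟨π, hπ⟩ := isConj_iff.1 (Equiv.Perm.isConj_iff_cycleType_eq.2 htype)
    have hS : b.perm.support ⊆ (π • a).support := by
      rw [← hπ]
      exact (π • a).perm_support_subset
    obtain ⟨w, hw, hfix⟩ := exists_perm_image_eq_of_card_eq
      (by rw [smul_support, Finset.card_image_of_injective _ π.injective, hcard])
      hS b.perm_support_subset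
    have hcomm : Commute w b.perm := by
      refine Equiv.Perm.Disjoint.commute fun x => ?_
      by_cases hx : b.perm x = x
      · exact Or.inr hx
      · exact Or.inl (hfix x (Equiv.Perm.mem_support.2 hx))
    refine ⟨w * π, ?_⟩
    rw [mul_smul]
    refine ext' hw ?_
    rw [smul_perm, smul_perm, hπ, hcomm.eq, mul_inv_cancel_right]
end

section
/- Let the symmetric group S_n act on the set P_n of partial permutations of {1,…,n} by v·(E,f) = (vE, v∘f∘v⁻¹). The map sending a partial permutation (E,f) to its cycle type (the partition of |E| whose parts are the cycle lengths of f together with one part 1 for each fixed point of f lying in E) induces a bijection between the set of S_n-orbits on P_n and the set of partitions Δ with |Δ| ≤ n. -/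
namespace PartialPerm

theorem perm_support_subset_s2 {n : ℕ} (a : PartialPerm n) : a.perm.support ⊆ a.support := by
  intro x hx
  by_contra h
  exact Equiv.Perm.mem_support.mp hx (a.fixes x h)

theorem card_perm_support_le {n : ℕ} (a : PartialPerm n) :
    a.perm.support.card ≤ a.support.card :=
  Finset.card_le_card a.perm_support_subset_s2

theorem sum_pCycleType {n : ℕ} (a : PartialPerm n) : (pCycleType a).sum = a.support.card := by
  have := a.card_perm_support_le
  simp only [pCycleType, Multiset.sum_add, Equiv.Perm.sum_cycleType, Multiset.sum_replicate,
    smul_eq_mul, mul_one]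
  omega

theorem one_le_of_mem_pCycleType {n : ℕ} (a : PartialPerm n) {i : ℕ} (hi : i ∈ pCycleType a) :
    1 ≤ i := by
  rcases Multiset.mem_add.mp hi with h | h
  · exact (Equiv.Perm.one_lt_of_mem_cycleType h).le
  · exact (Multiset.eq_of_mem_replicate h).ge

theorem filter_pCycleType {n : ℕ} (a : PartialPerm n) :
    (pCycleType a).filter (2 ≤ ·) = a.perm.cycleType := by
  rw [pCycleType, Multiset.filter_add,
    Multiset.filter_eq_self.mpr fun i hi => Equiv.Perm.two_le_of_mem_cycleType hi,
    Multiset.filter_eq_nil.mpr fun i hi => by simp [Multiset.eq_of_mem_replicate hi], add_zero]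

theorem pCycleType_smul {n : ℕ} (v : Equiv.Perm (Fin n)) (a : PartialPerm n) :
    pCycleType (v • a) = pCycleType a := by
  simp only [pCycleType, smul_support, smul_perm, Equiv.Perm.cycleType_conj,
    Equiv.Perm.card_support_conj, Finset.card_image_of_injective _ v.injective]

/-- Two supports of equal size containing the moved points of the same permutation are exchanged
by a permutation that fixes all these moved points, hence commutes with the given permutation. -/
theorem exists_smul_eq_of_perm_eq {n : ℕ} {a b : PartialPerm n} (hp : a.perm = b.perm)
    (hc : a.support.card = b.support.card) : ∃ w : Equiv.Perm (Fin n), w • a = b := by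
  obtain ⟨g, hg⟩ := Finset.exists_equiv_extend_of_card_eq (α := a.support) (t := b.support)
    (by simpa using hc) (s := Finset.univ.filter fun x => (x : Fin n) ∈ a.perm.support)
    (f := Subtype.val)
    (by
      intro x hx
      obtain ⟨y, hy, rfl⟩ := Finset.mem_image.mp hx
      exact b.perm_support_subset_s2 (hp ▸ (Finset.mem_filter.mp hy).2))
    Subtype.val_injective.injOn
  let w : Equiv.Perm (Fin n) := g.extendSubtype
  have hw : ∀ x ∈ a.perm.support, w x = x := fun x hx =>
    (g.extendSubtype_apply_of_mem x (a.perm_support_subset_s2 hx)).trans (hg ⟨x, _⟩ (by simpa using hx))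
  have hdisj : w.Disjoint a.perm := fun x => by
    by_cases hx : x ∈ a.perm.support
    · exact Or.inl (hw x hx)
    · exact Or.inr (Equiv.Perm.notMem_support.mp hx)
  refine ⟨w, ext' ?_ ?_⟩
  · refine Finset.eq_of_subset_of_card_le ?_ ?_
    · intro y hy
      obtain ⟨x, hx, rfl⟩ := Finset.mem_image.mp hy
      exact g.extendSubtype_mem x hx
    · rw [smul_support, Finset.card_image_of_injective _ w.injective, hc]
  · rw [smul_perm, hdisj.commute.eq, mul_inv_cancel_right, hp]

theorem exists_smul_eq_of_pCycleType_eq {n : ℕ} {a b : PartialPerm n}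
    (h : pCycleType a = pCycleType b) : ∃ v : Equiv.Perm (Fin n), v • a = b := by
  have hcyc : a.perm.cycleType = b.perm.cycleType := by
    rw [← filter_pCycleType, h, filter_pCycleType]
  obtain ⟨u, hu⟩ := isConj_iff.mp (Equiv.Perm.isConj_of_cycleType_eq hcyc)
  obtain ⟨w, hw⟩ := exists_smul_eq_of_perm_eq (a := u • a) (b := b) hu
    (by rw [← sum_pCycleType, pCycleType_smul, h, sum_pCycleType])
  exact ⟨w * u, by rw [mul_smul, hw]⟩

theorem exists_pCycleType_eq {n : ℕ} {Δ : Multiset ℕ} (hpos : ∀ i ∈ Δ, 1 ≤ i)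
    (hsum : Δ.sum ≤ n) : ∃ a : PartialPerm n, pCycleType a = Δ := by
  have hones : Δ.filter (fun i => ¬ 2 ≤ i) =
      Multiset.replicate (Δ.filter (fun i => ¬ 2 ≤ i)).card 1 :=
    Multiset.eq_replicate_card.mpr fun i hi => by
      obtain ⟨h1, h2⟩ := Multiset.mem_filter.mp hi
      have := hpos i h1
      omega
  have hsplit := Multiset.filter_add_not (2 ≤ ·) Δ
  set k := (Δ.filter (fun i => ¬ 2 ≤ i)).card
  have hk : (Δ.filter (2 ≤ ·)).sum + k = Δ.sum := by
    have := congrArg Multiset.sum hsplit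
    rwa [Multiset.sum_add, hones, Multiset.sum_replicate, smul_eq_mul, mul_one] at this
  obtain ⟨f, hf⟩ := (Equiv.Perm.exists_with_cycleType_iff (Fin n)
    (m := Δ.filter (2 ≤ ·))).mpr ⟨by rw [Fintype.card_fin]; omega,
      fun i hi => (Multiset.mem_filter.mp hi).2⟩
  have hfc : f.support.card = (Δ.filter (2 ≤ ·)).sum := by rw [← hf, Equiv.Perm.sum_cycleType]
  obtain ⟨E, hfE, -, hE⟩ := Finset.exists_subsuperset_card_eq (Finset.subset_univ f.support)
    (n := Δ.sum) (by omega) (by simpa using hsum)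
  refine ⟨⟨E, f, fun x hx => Equiv.Perm.notMem_support.mp fun h => hx (hfE h)⟩, ?_⟩
  have hsub : E.card - f.support.card = k := by omega
  rw [pCycleType, hf, hsub, ← hones, hsplit]

end PartialPerm

open PartialPerm in
/-- the map `(E,f) ↦ cycle type` induces a bijection between the set of
`S_n`-orbits on `P_n` and the set of partitions `Δ` (multisets of positive parts)
with `|Δ| ≤ n`. -/
theorem orbits_equiv_partitions (n : ℕ) :
    ∃ e : Quotient (MulAction.orbitRel (Equiv.Perm (Fin n)) (PartialPerm n)) ≃
        {Δ : Multiset ℕ // (∀ i ∈ Δ, 1 ≤ i) ∧ Δ.sum ≤ n},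
      ∀ a : PartialPerm n,
        (e (Quotient.mk (MulAction.orbitRel (Equiv.Perm (Fin n)) (PartialPerm n)) a) :
          Multiset ℕ) = pCycleType a := by
  have hone : ∀ a b : PartialPerm n,
      MulAction.orbitRel (Equiv.Perm (Fin n)) (PartialPerm n) a b ↔
        pCycleType a = pCycleType b := fun a b => by
    rw [MulAction.orbitRel_apply]
    constructor
    · rintro ⟨v, rfl⟩
      exact pCycleType_smul v b
    · intro h
      exact exists_smul_eq_of_pCycleType_eq h.symm
  let F : Quotient (MulAction.orbitRel (Equiv.Perm (Fin n)) (PartialPerm n)) →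
      {Δ : Multiset ℕ // (∀ i ∈ Δ, 1 ≤ i) ∧ Δ.sum ≤ n} :=
    Quotient.lift
      (fun a => ⟨pCycleType a, fun _ hi => one_le_of_mem_pCycleType a hi,
        (sum_pCycleType a).trans_le (by simpa using Finset.card_le_univ a.support)⟩)
      (fun a b h => Subtype.ext ((hone a b).mp h))
  refine ⟨Equiv.ofBijective F ⟨?_, ?_⟩, fun a => rfl⟩
  · rintro ⟨a⟩ ⟨b⟩ h
    exact Quotient.sound ((hone a b).mpr (congrArg Subtype.val h))
  · rintro ⟨Δ, hpos, hsum⟩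
    obtain ⟨a, ha⟩ := exists_pCycleType_eq hpos hsum
    exact ⟨Quotient.mk _ a, Subtype.ext ha⟩
end

section
/- For every n, the algebra B_n is isomorphic as a ℂ-algebra to the direct sum, over all subsets F of {1,…,n}, of the complex group algebras ℂ[S_F] of the symmetric groups on F. -/
namespace PartialPerm

theorem one_support {n : ℕ} : (1 : PartialPerm n).support = ∅ := rfl

theorem perm_mem_iff {n : ℕ} (a : PartialPerm n) {F : Finset (Fin n)} (h : a.support ⊆ F)
    (x : Fin n) : a.perm x ∈ F ↔ x ∈ F := by
  have fix : ∀ y, y ∉ F → a.perm y = y := fun y hy => a.fixes y fun hm => hy (h hm)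
  constructor
  · intro hx
    by_contra hn
    exact hn (fix x hn ▸ hx)
  · intro hx
    by_contra hn
    -- a point mapped outside `F` has a fixed image, hence equals it by injectivity
    have hfix : a.perm x = x := a.perm.injective (fix _ hn)
    exact hn (hfix.symm ▸ hx)

/-- The restriction of `(E, f)` to a set `F ⊇ E`, as a permutation of `F`. -/
def restrict {n : ℕ} (a : PartialPerm n) (F : Finset (Fin n)) (h : a.support ⊆ F) :
    Equiv.Perm {x : Fin n // x ∈ F} :=
  a.perm.subtypePerm (a.perm_mem_iff h)

/-- The partial permutation with support `F` given by a permutation of `F`. -/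
def extend {n : ℕ} (F : Finset (Fin n)) (g : Equiv.Perm {x : Fin n // x ∈ F}) : PartialPerm n :=
  ⟨F, Equiv.Perm.ofSubtype g, fun _ hx => Equiv.Perm.ofSubtype_apply_of_not_mem g hx⟩

theorem restrict_extend {n : ℕ} (F : Finset (Fin n)) (g : Equiv.Perm {x : Fin n // x ∈ F}) :
    (extend F g).restrict F (Finset.Subset.refl F) = g :=
  Equiv.Perm.subtypePerm_ofSubtype g

/-- The multiplicative map `P_n → ℂ[S_F]` sending `(E, f)` to `f|_F` if `E ⊆ F` and to `0`
otherwise. -/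
noncomputable def toGroupAlgebra (n : ℕ) (F : Finset (Fin n)) :
    PartialPerm n →* MonoidAlgebra ℂ (Equiv.Perm {x : Fin n // x ∈ F}) where
  toFun a := if h : a.support ⊆ F then MonoidAlgebra.single (a.restrict F h) 1 else 0
  map_one' := by
    rw [dif_pos (by simp [one_support])]
    rfl
  map_mul' a b := by
    by_cases ha : a.support ⊆ F
    · by_cases hb : b.support ⊆ F
      · have hab : (a * b).support ⊆ F := Finset.union_subset ha hb
        rw [dif_pos ha, dif_pos hb, dif_pos hab, MonoidAlgebra.single_mul_single, one_mul]
        rfl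
      · rw [dif_neg hb, mul_zero,
          dif_neg fun h : (a * b).support ⊆ F => hb (Finset.subset_union_right.trans h)]
    · rw [dif_neg ha, zero_mul,
        dif_neg fun h : (a * b).support ⊆ F => ha (Finset.subset_union_left.trans h)]

theorem toGroupAlgebra_of_subset {n : ℕ} {F : Finset (Fin n)} {a : PartialPerm n}
    (h : a.support ⊆ F) :
    toGroupAlgebra n F a = MonoidAlgebra.single (a.restrict F h) 1 := dif_pos h

theorem toGroupAlgebra_of_not_subset {n : ℕ} {F : Finset (Fin n)} {a : PartialPerm n}
    (h : ¬ a.support ⊆ F) : toGroupAlgebra n F a = 0 := dif_neg h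

/-- The algebra homomorphism `B_n → ∏_F ℂ[S_F]` with components `toGroupAlgebra n F`. -/
noncomputable def toPi (n : ℕ) : MonoidAlgebra ℂ (PartialPerm n) →ₐ[ℂ]
    ∀ F : Finset (Fin n), MonoidAlgebra ℂ (Equiv.Perm {x : Fin n // x ∈ F}) :=
  AlgHom.pi fun F => MonoidAlgebra.lift ℂ _ _ (toGroupAlgebra n F)

theorem toPi_single {n : ℕ} (a : PartialPerm n) (F : Finset (Fin n)) :
    toPi n (MonoidAlgebra.single a 1) F = toGroupAlgebra n F a := by
  simp [toPi]

/-- Descending induction on `F`: the image of `(F, g)` differs from the basis vector `g` of the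
component `F` by basis vectors in components strictly containing `F`. -/
theorem piSingle_mem_range {n : ℕ} (F : Finset (Fin n))
    (g : Equiv.Perm {x : Fin n // x ∈ F}) :
    Pi.single F (MonoidAlgebra.single g (1 : ℂ)) ∈ LinearMap.range (toPi n).toLinearMap := by
  induction F using WellFoundedGT.induction with
  | ind F ih =>
    set v := toPi n (MonoidAlgebra.single (extend F g) 1) with hv
    have hF : v F = MonoidAlgebra.single g 1 := by
      rw [hv, toPi_single,
        toGroupAlgebra_of_subset (a := extend F g) (Finset.Subset.refl F), restrict_extend]
    have hsum : Pi.single F (v F) + ∑ G ∈ Finset.univ.erase F, Pi.single G (v G) = v := by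
      rw [Finset.add_sum_erase _ (fun G => Pi.single G (v G)) (Finset.mem_univ F),
        Finset.univ_sum_single]
    rw [← hF, eq_sub_of_add_eq hsum]
    refine Submodule.sub_mem _ ⟨_, rfl⟩ (Submodule.sum_mem _ fun G hG => ?_)
    rw [hv, toPi_single]
    by_cases hFG : F ⊆ G
    · rw [toGroupAlgebra_of_subset (a := extend F g) hFG]
      exact ih G (lt_of_le_of_ne hFG (Finset.ne_of_mem_erase hG).symm) _
    · rw [toGroupAlgebra_of_not_subset (a := extend F g) hFG, Pi.single_zero]
      exact Submodule.zero_mem _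

theorem toPi_surjective (n : ℕ) : Function.Surjective (toPi n).toLinearMap := by
  intro w
  rw [← LinearMap.mem_range, ← Finset.univ_sum_single w]
  refine Submodule.sum_mem _ fun F _ => ?_
  generalize w F = u
  induction u using MonoidAlgebra.induction_linear with
  | zero => simp
  | add x y hx hy => rw [Pi.single_add]; exact Submodule.add_mem _ hx hy
  | single g r =>
    have h := Submodule.smul_mem _ r (piSingle_mem_range F g)
    rwa [← Pi.single_smul, MonoidAlgebra.smul_single, smul_eq_mul, mul_one] at h

/-- A partial permutation amounts to its support `F` together with a permutation of `F`. -/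
noncomputable def equivSigma (n : ℕ) :
    (Σ F : Finset (Fin n), Equiv.Perm {x : Fin n // x ∈ F}) ≃ PartialPerm n where
  toFun p := extend p.1 p.2
  invFun a := ⟨a.support, a.restrict a.support (Finset.Subset.refl _)⟩
  left_inv p := by
    obtain ⟨F, g⟩ := p
    exact congrArg (Sigma.mk F) (restrict_extend F g)
  right_inv a := ext' rfl <| Equiv.Perm.ofSubtype_subtypePerm
    (a.perm_mem_iff (Finset.Subset.refl a.support)) fun x hx => by
    by_contra h
    exact hx (a.fixes x h)

theorem finrank_monoidAlgebra (M : Type*) [Monoid M] [Fintype M] :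
    Module.finrank ℂ (MonoidAlgebra ℂ M) = Fintype.card M := by
  rw [(MonoidAlgebra.coeffLinearEquiv ℂ).finrank_eq, Module.finrank_finsupp_self]

instance finite_monoidAlgebra (M : Type*) [Monoid M] [Finite M] :
    Module.Finite ℂ (MonoidAlgebra ℂ M) :=
  Module.Finite.equiv (MonoidAlgebra.coeffLinearEquiv (S := ℂ) (M := M) ℂ).symm

theorem finrank_eq (n : ℕ) : Module.finrank ℂ (MonoidAlgebra ℂ (PartialPerm n)) =
    Module.finrank ℂ
      (∀ F : Finset (Fin n), MonoidAlgebra ℂ (Equiv.Perm {x : Fin n // x ∈ F})) := by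
  rw [Module.finrank_pi_fintype, finrank_monoidAlgebra, ← Fintype.card_congr (equivSigma n),
    Fintype.card_sigma]
  simp only [finrank_monoidAlgebra]

end PartialPerm

/-- `B_n = ℂ[P_n]` is isomorphic as a `ℂ`-algebra to the direct sum
(= direct product, since the index set is finite), over all subsets `F` of `{1,…,n}`,
of the complex group algebras `ℂ[S_F]`. -/
theorem monoidAlgebra_partialPerm_iso (n : ℕ) :
    Nonempty (MonoidAlgebra ℂ (PartialPerm n) ≃ₐ[ℂ]
      ∀ F : Finset (Fin n), MonoidAlgebra ℂ (Equiv.Perm {x : Fin n // x ∈ F})) := by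
  have hsurj := PartialPerm.toPi_surjective n
  have hinj := (LinearMap.injective_iff_surjective_of_finrank_eq_finrank
    (PartialPerm.finrank_eq n)).2 hsurj
  exact ⟨AlgEquiv.ofBijective (PartialPerm.toPi n) ⟨hinj, hsurj⟩⟩
end

section
/- For any two partitions Δ₁ and Δ₂ there exists a family of nonnegative rational constants Ĉ^{Δ₃}_{Δ₁,Δ₂}, indexed by partitions Δ₃ and nonzero for only finitely many Δ₃ (all satisfying |Δ₃| ≤ |Δ₁| + |Δ₂|), such that for every natural number n the identity [C(n−|Δ₁|+m₁(Δ₁), m₁(Δ₁)) · C_{Δ₁;n}] · [C(n−|Δ₂|+m₁(Δ₂), m₁(Δ₂)) · C_{Δ₂;n}] = ∑_{Δ₃} Ĉ^{Δ₃}_{Δ₁,Δ₂} · C(n−|Δ₃|+m₁(Δ₃), m₁(Δ₃)) · C_{Δ₃;n} holds in the group algebra ℂ[S_n]. In particular the structure constants of the shifted central elements do not depend on n. -/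
/-!
The proof lifts the identity to partial permutations (Ivanov–Kerov). The binomial coefficient in
`shiftedCentral Δ n` counts the sets `S` of size `|Δ|` containing the support of a permutation of
cycle type `[Δ, 1^(n-|Δ|)]`, so `shiftedCentral Δ n` is the sum of `σ` over all pairs `(S, σ)` with
`S ⊆ {1,…,n}`, `σ` supported in `S` and of cycle type exactly `Δ` on `S`
(`shiftedCentral_eq_sum`).

Such pairs multiply by `(S, σ) (T, τ) = (S ∪ T, σ τ)`. The number of factorizations of `(U, ρ)` into
factors of types `Δ₁` and `Δ₂` is intrinsic to `ρ` as a permutation of `U`, because both factors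
live inside `U`; any two partial permutations of the same type, even in different ambient sets,
are related by a bijection of their domains, so this number depends only on the type of `(U, ρ)`
(`card_factorizations_eq`). It is the structure constant, manifestly independent of `n`, and the
bound on its support is `|S ∪ T| ≤ |S| + |T|`.
-/

/-- `classSum Δ n` : the sum `C_{Δ;n}`, in the complex group algebra `ℂ[S_n]`, of all
permutations of `{1,…,n}` of cycle type `[Δ, 1^{n-|Δ|}]` (i.e. whose Mathlib cycle
type — the parts `≥ 2` — is the multiset of parts of `Δ` that are `≥ 2`); it is `0`
when `|Δ| > n`. -/
noncomputable def classSum (Δ : Multiset ℕ) (n : ℕ) :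
    MonoidAlgebra ℂ (Equiv.Perm (Fin n)) :=
  if Δ.sum ≤ n then
    ∑ σ : Equiv.Perm (Fin n),
      if σ.cycleType = Δ.filter (fun i => 2 ≤ i) then MonoidAlgebra.single σ (1 : ℂ) else 0
  else 0

/-- The *shifted central element* of `ℂ[S_n]` associated to a partition `Δ`:
`C(n-|Δ|+m₁(Δ), m₁(Δ)) · C_{Δ;n}`, where `m₁(Δ)` is the number of parts of `Δ`
equal to `1`. -/
noncomputable def shiftedCentral (Δ : Multiset ℕ) (n : ℕ) :
    MonoidAlgebra ℂ (Equiv.Perm (Fin n)) :=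
  ((n - Δ.sum + Δ.count 1).choose (Δ.count 1) : ℂ) • classSum Δ n

/-! ### Partial permutations and the shifted central elements -/

/-- The partial permutations of `α` of type `Δ`: pairs `(S, σ)` where `σ` is supported in `S`,
`|S| = |Δ|`, and the nontrivial cycles of `σ` are the parts of `Δ` that are at least `2`
(so that `Δ` is the cycle type of `σ` as a permutation of `S`, if `0 ∉ Δ`). -/
def partialPerms (Δ : Multiset ℕ) (α : Type*) [Fintype α] [DecidableEq α] :
    Finset (Finset α × Equiv.Perm α) :=
  Finset.univ.filter fun p =>
    p.1.card = Δ.sum ∧ p.2.support ⊆ p.1 ∧ p.2.cycleType = Δ.filter (fun i => 2 ≤ i)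

/-- The pairs of partial permutations of types `Δ₁`, `Δ₂` whose product is the partial permutation
`(U, ρ)`; domains are multiplied by taking their union. -/
def factorizations (Δ₁ Δ₂ : Multiset ℕ) {α : Type*} [Fintype α] [DecidableEq α]
    (U : Finset α) (ρ : Equiv.Perm α) :
    Finset ((Finset α × Equiv.Perm α) × (Finset α × Equiv.Perm α)) :=
  (partialPerms Δ₁ α ×ˢ partialPerms Δ₂ α).filter fun x =>
    x.1.1 ∪ x.2.1 = U ∧ x.1.2 * x.2.2 = ρ

lemma mem_partialPerms {Δ : Multiset ℕ} {α : Type*} [Fintype α] [DecidableEq α]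
    {S : Finset α} {σ : Equiv.Perm α} :
    (S, σ) ∈ partialPerms Δ α ↔
      S.card = Δ.sum ∧ σ.support ⊆ S ∧ σ.cycleType = Δ.filter (fun i => 2 ≤ i) := by
  simp [partialPerms]

lemma eq_filter_add_replicate_count (Δ : Multiset ℕ) (h : ∀ i ∈ Δ, 1 ≤ i) :
    Δ = Δ.filter (fun i => 2 ≤ i) + Multiset.replicate (Δ.count 1) 1 := by
  conv_lhs => rw [← Multiset.filter_add_not (fun i => 2 ≤ i) Δ]
  congr 1
  rw [← Multiset.filter_eq' Δ 1]
  apply Multiset.filter_congr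
  intro i hi
  have := h i hi
  omega

lemma card_supersets {α : Type*} [Fintype α] [DecidableEq α] (A : Finset α) (m : ℕ) :
    (Finset.univ.filter fun S : Finset α => S.card = A.card + m ∧ A ⊆ S).card
      = (Fintype.card α - A.card).choose m := by
  rw [← Finset.card_compl, ← Finset.card_powersetCard]
  -- a superset of `A` is determined by its part outside `A`
  refine Finset.card_bij' (fun S _ => S \ A) (fun T _ => T ∪ A) ?_ ?_ ?_ ?_
  · intro S hS
    simp only [Finset.mem_filter, Finset.mem_univ, true_and] at hS
    rw [Finset.mem_powersetCard, Finset.card_sdiff_of_subset hS.2]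
    refine ⟨fun x hx => ?_, by omega⟩
    simp at hx ⊢
    exact hx.2
  · intro T hT
    rw [Finset.mem_powersetCard] at hT
    have hd : Disjoint T A := Finset.disjoint_left.2 fun x hx => by simpa using hT.1 hx
    simp only [Finset.mem_filter, Finset.mem_univ, true_and]
    rw [Finset.card_union_of_disjoint hd]
    exact ⟨by omega, Finset.subset_union_right⟩
  · intro S hS
    simp only [Finset.mem_filter, Finset.mem_univ, true_and] at hS
    exact Finset.sdiff_union_of_subset hS.2
  · intro T hT
    rw [Finset.mem_powersetCard] at hT
    have hd : Disjoint T A := Finset.disjoint_left.2 fun x hx => by simpa using hT.1 hx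
    rw [Finset.union_sdiff_right]
    exact Finset.sdiff_eq_self_of_disjoint hd

/-- The binomial coefficient in `shiftedCentral` counts the possible domains of a partial
permutation with given underlying permutation. -/
lemma shiftedCentral_eq_sum (Δ : Multiset ℕ) (h : ∀ i ∈ Δ, 1 ≤ i) (n : ℕ) :
    shiftedCentral Δ n = ∑ p ∈ partialPerms Δ (Fin n), MonoidAlgebra.single p.2 (1 : ℂ) := by
  have hsum : Δ.sum = (Δ.filter (fun i => 2 ≤ i)).sum + Δ.count 1 := by
    conv_lhs => rw [eq_filter_add_replicate_count Δ h]
    simp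
  rw [partialPerms, Finset.sum_filter, Fintype.sum_prod_type, Finset.sum_comm, shiftedCentral,
    classSum]
  by_cases hn : Δ.sum ≤ n
  · rw [if_pos hn, Finset.smul_sum]
    refine Finset.sum_congr rfl fun σ _ => ?_
    by_cases hσ : σ.cycleType = Δ.filter (fun i => 2 ≤ i)
    · have hc : σ.support.card = (Δ.filter (fun i => 2 ≤ i)).sum := by
        rw [← hσ, Equiv.Perm.sum_cycleType]
      simp only [hσ, and_true, if_true]
      rw [← Finset.sum_filter, Finset.sum_const, hsum, ← hc, card_supersets, ← Nat.cast_smul_eq_nsmul ℂ,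
        Fintype.card_fin]
      congr 3
      omega
    · simp [hσ]
  · rw [if_neg hn, smul_zero]
    refine (Finset.sum_eq_zero fun σ _ => Finset.sum_eq_zero fun S _ => if_neg fun hS => hn ?_).symm
    rw [← hS.1]
    simpa using Finset.card_le_univ S

/-! ### Invariance of the number of factorizations -/

/-- Every permutation supported in `U` comes from a permutation of any type in bijection
with `U`. -/
lemma exists_extendDomain {α β : Type*} [Fintype α] [DecidableEq α] {U : Finset α}
    (f : β ≃ {x // x ∈ U}) {σ : Equiv.Perm α} (h : σ.support ⊆ U) :
    ∃ τ : Equiv.Perm β, τ.extendDomain f = σ := by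
  have hU : ∀ x, σ x ∈ U ↔ x ∈ U := by
    intro x
    by_cases hx : σ x = x
    · rw [hx]
    · have h1 := h (Equiv.Perm.mem_support.2 hx)
      have h2 := h (Equiv.Perm.apply_mem_support.2 (Equiv.Perm.mem_support.2 hx))
      exact iff_of_true h2 h1
  refine ⟨f.symm.permCongr (σ.subtypePerm hU), ?_⟩
  ext x
  by_cases hx : x ∈ U
  · rw [Equiv.Perm.extendDomain_apply_subtype _ _ hx]
    simp [Equiv.permCongr_apply]
  · rw [Equiv.Perm.extendDomain_apply_not_subtype _ _ hx]
    by_contra hne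
    exact hx (h (Equiv.Perm.mem_support.2 (Ne.symm hne)))

lemma mem_partialPerms_extendDomain {Δ : Multiset ℕ} {α β : Type*} [Fintype α] [DecidableEq α]
    [Fintype β] [DecidableEq β] {U : Finset α} (f : β ≃ {x // x ∈ U})
    {S : Finset β} {σ : Equiv.Perm β} :
    (S.map f.asEmbedding, σ.extendDomain f) ∈ partialPerms Δ α ↔ (S, σ) ∈ partialPerms Δ β := by
  rw [mem_partialPerms, mem_partialPerms, Finset.card_map, Equiv.Perm.support_extend_domain,
    Finset.map_subset_map, Equiv.Perm.cycleType_extendDomain]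

lemma map_univ_asEmbedding {α β : Type*} [Fintype β] {U : Finset α} (f : β ≃ {x // x ∈ U}) :
    Finset.univ.map f.asEmbedding = U := by
  ext x
  simp only [Finset.mem_map, Finset.mem_univ, true_and]
  constructor
  · rintro ⟨b, rfl⟩
    exact (f b).2
  · intro hx
    exact ⟨f.symm ⟨x, hx⟩, by simp [Equiv.asEmbedding]⟩

/-- The factors of a partial permutation with domain `U` live on subsets of `U`, so
factorizations may be counted on any copy of `U`. -/
lemma card_factorizations_extendDomain (Δ₁ Δ₂ : Multiset ℕ) {α β : Type*} [Fintype α]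
    [DecidableEq α] [Fintype β] [DecidableEq β] {U : Finset α} (f : β ≃ {x // x ∈ U})
    (ρ : Equiv.Perm β) :
    (factorizations Δ₁ Δ₂ Finset.univ ρ).card
      = (factorizations Δ₁ Δ₂ U (ρ.extendDomain f)).card := by
  have hinj : Function.Injective fun σ : Equiv.Perm β => σ.extendDomain f :=
    Equiv.Perm.extendDomainHom_injective f
  have hmap := Finset.map_injective f.asEmbedding
  -- a subset of `U` carrying a permutation supported in it comes from `β`
  have hlift : ∀ (S : Finset α) (σ : Equiv.Perm α), S ⊆ U → σ.support ⊆ S →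
      ∃ (S' : Finset β) (σ' : Equiv.Perm β), S'.map f.asEmbedding = S ∧ σ'.extendDomain f = σ := by
    intro S σ hS hσ
    obtain ⟨σ', h'⟩ := exists_extendDomain f (hσ.trans hS)
    rw [← map_univ_asEmbedding f, Finset.subset_map_iff] at hS
    obtain ⟨S', _, rfl⟩ := hS
    exact ⟨S', σ', rfl, h'⟩
  refine Finset.card_bij (fun x _ => ((x.1.1.map f.asEmbedding, x.1.2.extendDomain f),
    (x.2.1.map f.asEmbedding, x.2.2.extendDomain f))) ?_ ?_ ?_
  · rintro ⟨⟨S, σ⟩, ⟨T, τ⟩⟩ hx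
    simp only [factorizations, Finset.mem_filter, Finset.mem_product,
      mem_partialPerms_extendDomain] at hx ⊢
    refine ⟨hx.1, ?_, ?_⟩
    · rw [← Finset.map_union, hx.2.1, map_univ_asEmbedding]
    · rw [Equiv.Perm.extendDomain_mul, hx.2.2]
  · rintro ⟨⟨S, σ⟩, ⟨T, τ⟩⟩ _ ⟨⟨S', σ'⟩, ⟨T', τ'⟩⟩ _ h
    simp only [Prod.mk.injEq] at h ⊢
    exact ⟨⟨hmap h.1.1, hinj h.1.2⟩, hmap h.2.1, hinj h.2.2⟩
  · rintro ⟨⟨S, σ⟩, ⟨T, τ⟩⟩ hx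
    simp only [factorizations, Finset.mem_filter, Finset.mem_product] at hx
    obtain ⟨⟨h1, h2⟩, hU, hρ⟩ := hx
    obtain ⟨S, σ, rfl, rfl⟩ := hlift S σ (hU ▸ Finset.subset_union_left) (mem_partialPerms.1 h1).2.1
    obtain ⟨T, τ, rfl, rfl⟩ := hlift T τ (hU ▸ Finset.subset_union_right) (mem_partialPerms.1 h2).2.1
    rw [mem_partialPerms_extendDomain] at h1 h2
    refine ⟨((S, σ), (T, τ)), ?_, rfl⟩
    simp only [factorizations, Finset.mem_filter, Finset.mem_product]
    refine ⟨⟨h1, h2⟩, hmap ?_, hinj ?_⟩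
    · rw [Finset.map_union, hU, map_univ_asEmbedding]
    · simp only [← hρ, Equiv.Perm.extendDomain_mul]

/-- The number of factorizations of a partial permutation depends only on its type, not even on
the ambient set. -/
lemma card_factorizations_eq (Δ₁ Δ₂ : Multiset ℕ) {Δ : Multiset ℕ} {α α' : Type*} [Fintype α]
    [DecidableEq α] [Fintype α'] [DecidableEq α'] {U : Finset α} {ρ : Equiv.Perm α}
    {U' : Finset α'} {ρ' : Equiv.Perm α'} (h : (U, ρ) ∈ partialPerms Δ α)
    (h' : (U', ρ') ∈ partialPerms Δ α') :
    (factorizations Δ₁ Δ₂ U ρ).card = (factorizations Δ₁ Δ₂ U' ρ').card := by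
  rw [mem_partialPerms] at h h'
  let e : {x // x ∈ U} ≃ {x // x ∈ U'} := Finset.equivOfCardEq (h.1.trans h'.1.symm)
  obtain ⟨a, ha⟩ := exists_extendDomain (Equiv.refl {x // x ∈ U}) h.2.1
  obtain ⟨b, hb⟩ := exists_extendDomain e h'.2.1
  have hab : a.cycleType = b.cycleType := by
    rw [← Equiv.Perm.cycleType_extendDomain (Equiv.refl {x // x ∈ U}), ha,
      ← Equiv.Perm.cycleType_extendDomain e, hb, h.2.2, h'.2.2]
  obtain ⟨c, hc⟩ := isConj_iff.1 (Equiv.Perm.isConj_iff_cycleType_eq.2 hab)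
  -- the conjugator corrects the arbitrary bijection `e` so that it carries `ρ` to `ρ'`
  have key : a.extendDomain (Equiv.trans c e) = ρ' := by
    rw [← hb, ← hc]
    ext x
    by_cases hx : x ∈ U'
    · rw [Equiv.Perm.extendDomain_apply_subtype _ _ hx, Equiv.Perm.extendDomain_apply_subtype _ _ hx]
      simp [Equiv.Perm.inv_def]
    · rw [Equiv.Perm.extendDomain_apply_not_subtype _ _ hx,
        Equiv.Perm.extendDomain_apply_not_subtype _ _ hx]
  rw [← ha, ← key, ← card_factorizations_extendDomain, ← card_factorizations_extendDomain]

/-! ### Types of partial permutations -/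

/-- The cycle type of a partial permutation `(U, ρ)` on its domain, fixed points included. -/
def partialType {α : Type*} [Fintype α] [DecidableEq α] (p : Finset α × Equiv.Perm α) :
    Multiset ℕ :=
  p.2.cycleType + Multiset.replicate (p.1.card - p.2.support.card) 1

lemma one_le_of_mem_partialType {α : Type*} [Fintype α] [DecidableEq α]
    (p : Finset α × Equiv.Perm α) : ∀ i ∈ partialType p, 1 ≤ i := by
  intro i hi
  rcases Multiset.mem_add.1 hi with hi | hi
  · exact (Equiv.Perm.two_le_of_mem_cycleType hi).trans' one_le_two
  · exact (Multiset.eq_of_mem_replicate hi).ge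

lemma sum_partialType {α : Type*} [Fintype α] [DecidableEq α] {U : Finset α} {ρ : Equiv.Perm α}
    (h : ρ.support ⊆ U) : (partialType (U, ρ)).sum = U.card := by
  have := Finset.card_le_card h
  simp [partialType, Equiv.Perm.sum_cycleType]
  omega

lemma mem_partialPerms_iff {Δ : Multiset ℕ} (hΔ : ∀ i ∈ Δ, 1 ≤ i) {α : Type*} [Fintype α]
    [DecidableEq α] {U : Finset α} {ρ : Equiv.Perm α} :
    (U, ρ) ∈ partialPerms Δ α ↔ ρ.support ⊆ U ∧ partialType (U, ρ) = Δ := by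
  rw [mem_partialPerms]
  have hd := eq_filter_add_replicate_count Δ hΔ
  constructor
  · rintro ⟨h1, h2, h3⟩
    refine ⟨h2, ?_⟩
    have hs : Δ.sum = ρ.support.card + Δ.count 1 := by
      rw [← Equiv.Perm.sum_cycleType, h3]
      conv_lhs => rw [hd]
      simp
    rw [partialType, h3]
    conv_rhs => rw [hd]
    congr 2
    simp only
    omega
  · rintro ⟨h1, rfl⟩
    refine ⟨(sum_partialType h1).symm, h1, ?_⟩
    rw [partialType, Multiset.filter_add,
      Multiset.filter_eq_self.2 fun i hi => Equiv.Perm.two_le_of_mem_cycleType hi,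
      Multiset.filter_eq_nil.2, add_zero]
    intro i hi
    rw [Multiset.eq_of_mem_replicate hi]
    omega

/-- The partitions of the integers up to `s`. -/
def partitionsUpTo (s : ℕ) : Finset (Multiset ℕ) :=
  (Finset.range (s + 1)).biUnion fun k => Finset.univ.image (Nat.Partition.parts (n := k))

lemma mem_partitionsUpTo {s : ℕ} {Δ : Multiset ℕ} :
    Δ ∈ partitionsUpTo s ↔ (∀ i ∈ Δ, 1 ≤ i) ∧ Δ.sum ≤ s := by
  simp only [partitionsUpTo, Finset.mem_biUnion, Finset.mem_range, Finset.mem_image,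
    Finset.mem_univ, true_and]
  constructor
  · rintro ⟨k, hk, P, rfl⟩
    exact ⟨fun i hi => P.parts_pos hi, by rw [P.parts_sum]; omega⟩
  · rintro ⟨h1, h2⟩
    exact ⟨Δ.sum, by omega, ⟨Δ, fun hi => h1 _ hi, rfl⟩, rfl⟩

/-! ### Structure constants -/

open Classical in
/-- The structure constant at `Δ₃`: the number of factorizations of any partial permutation of
type `Δ₃` of some set `{1,…,n}`. Such a partial permutation always exists; the default value `0`
saves exhibiting one. -/
noncomputable def structureConstant (Δ₁ Δ₂ Δ₃ : Multiset ℕ) : ℕ :=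
  if h : ∃ (n : ℕ) (p : Finset (Fin n) × Equiv.Perm (Fin n)), p ∈ partialPerms Δ₃ (Fin n) then
    (factorizations Δ₁ Δ₂ h.choose_spec.choose.1 h.choose_spec.choose.2).card
  else 0

lemma card_factorizations_eq_structureConstant (Δ₁ Δ₂ : Multiset ℕ) {Δ₃ : Multiset ℕ} {n : ℕ}
    {p : Finset (Fin n) × Equiv.Perm (Fin n)} (hp : p ∈ partialPerms Δ₃ (Fin n)) :
    (factorizations Δ₁ Δ₂ p.1 p.2).card = structureConstant Δ₁ Δ₂ Δ₃ := by
  have h : ∃ (n : ℕ) (p : Finset (Fin n) × Equiv.Perm (Fin n)), p ∈ partialPerms Δ₃ (Fin n) :=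
    ⟨n, p, hp⟩
  rw [structureConstant, dif_pos h]
  exact card_factorizations_eq Δ₁ Δ₂ hp h.choose_spec.choose_spec

/-- The product of two partial permutations, with type in the expected range. -/
lemma partialPerms_mul {Δ₁ Δ₂ : Multiset ℕ} {α : Type*} [Fintype α] [DecidableEq α]
    {p q : Finset α × Equiv.Perm α} (hp : p ∈ partialPerms Δ₁ α) (hq : q ∈ partialPerms Δ₂ α) :
    (p.2 * q.2).support ⊆ p.1 ∪ q.1 ∧
      partialType (p.1 ∪ q.1, p.2 * q.2) ∈ partitionsUpTo (Δ₁.sum + Δ₂.sum) := by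
  obtain ⟨S, σ⟩ := p
  obtain ⟨T, τ⟩ := q
  rw [mem_partialPerms] at hp hq
  have hs : (σ * τ).support ⊆ S ∪ T :=
    (Equiv.Perm.support_mul_le σ τ).trans (Finset.union_subset_union hp.2.1 hq.2.1)
  refine ⟨hs, mem_partitionsUpTo.2 ⟨one_le_of_mem_partialType _, ?_⟩⟩
  rw [sum_partialType hs, ← hp.1, ← hq.1]
  exact Finset.card_union_le S T

/-- The product formula, obtained by sorting the pairs of partial permutations first by the type
of their product and then by the product itself. -/
lemma shiftedCentral_mul (Δ₁ Δ₂ : Multiset ℕ) (h₁ : ∀ i ∈ Δ₁, 1 ≤ i) (h₂ : ∀ i ∈ Δ₂, 1 ≤ i)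
    (n : ℕ) :
    shiftedCentral Δ₁ n * shiftedCentral Δ₂ n =
      ∑ Δ₃ ∈ partitionsUpTo (Δ₁.sum + Δ₂.sum),
        (structureConstant Δ₁ Δ₂ Δ₃ : ℂ) • shiftedCentral Δ₃ n := by
  rw [shiftedCentral_eq_sum Δ₁ h₁, shiftedCentral_eq_sum Δ₂ h₂, Finset.sum_mul_sum,
    ← Finset.sum_product']
  have hmaps : ∀ x ∈ partialPerms Δ₁ (Fin n) ×ˢ partialPerms Δ₂ (Fin n),
      partialType (x.1.1 ∪ x.2.1, x.1.2 * x.2.2) ∈ partitionsUpTo (Δ₁.sum + Δ₂.sum) := by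
    intro x hx
    rw [Finset.mem_product] at hx
    exact (partialPerms_mul hx.1 hx.2).2
  rw [← Finset.sum_fiberwise_of_maps_to hmaps]
  refine Finset.sum_congr rfl fun Δ₃ hΔ₃ => ?_
  have h₃ := (mem_partitionsUpTo.1 hΔ₃).1
  rw [shiftedCentral_eq_sum Δ₃ h₃, Finset.smul_sum]
  rw [← Finset.sum_fiberwise_of_maps_to (t := partialPerms Δ₃ (Fin n))
    (g := fun x : (Finset (Fin n) × Equiv.Perm (Fin n)) × (Finset (Fin n) × Equiv.Perm (Fin n)) =>
      (x.1.1 ∪ x.2.1, x.1.2 * x.2.2))]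
  · refine Finset.sum_congr rfl fun p hp => ?_
    rw [Nat.cast_smul_eq_nsmul, ← card_factorizations_eq_structureConstant Δ₁ Δ₂ hp,
      ← Finset.sum_const]
    refine Finset.sum_congr ?_ fun x hx => ?_
    · ext x
      simp only [factorizations, Finset.mem_filter, Prod.ext_iff]
      constructor
      · rintro ⟨⟨hx, _⟩, h⟩
        exact ⟨hx, h⟩
      · rintro ⟨hx, h⟩
        refine ⟨⟨hx, ?_⟩, h⟩
        rw [h.1, h.2]
        exact ((mem_partialPerms_iff h₃).1 hp).2
    · have hx' := (Finset.mem_filter.1 hx).2.2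
      rw [MonoidAlgebra.single_mul_single, one_mul, hx']
  · intro x hx
    rw [Finset.mem_filter, Finset.mem_product] at hx
    exact (mem_partialPerms_iff h₃).2 ⟨(partialPerms_mul hx.1.1 hx.1.2).1, hx.2⟩

/-- for any two partitions `Δ₁, Δ₂` there is a finitely supported family
of nonnegative rational structure constants `Ĉ^{Δ₃}_{Δ₁,Δ₂}` (indexed by partitions
`Δ₃`, all with `|Δ₃| ≤ |Δ₁| + |Δ₂|`) such that for EVERY `n` the product of the
shifted central elements of `ℂ[S_n]` attached to `Δ₁` and `Δ₂` equals
`∑_{Δ₃} Ĉ^{Δ₃}_{Δ₁,Δ₂}` times the shifted central element attached to `Δ₃`; in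
particular the structure constants do not depend on `n`. -/
theorem structure_constants_shiftedCentral (Δ₁ Δ₂ : Multiset ℕ)
    (h₁ : ∀ i ∈ Δ₁, 1 ≤ i) (h₂ : ∀ i ∈ Δ₂, 1 ≤ i) :
    ∃ C : Multiset ℕ →₀ ℚ,
      (∀ Δ₃, 0 ≤ C Δ₃) ∧
      (∀ Δ₃ ∈ C.support, (∀ i ∈ Δ₃, 1 ≤ i) ∧ Δ₃.sum ≤ Δ₁.sum + Δ₂.sum) ∧
      (∀ n : ℕ, shiftedCentral Δ₁ n * shiftedCentral Δ₂ n =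
          ∑ Δ₃ ∈ C.support, (C Δ₃ : ℂ) • shiftedCentral Δ₃ n) := by
  refine ⟨Finsupp.onFinset (partitionsUpTo (Δ₁.sum + Δ₂.sum))
    (fun Δ₃ => if Δ₃ ∈ partitionsUpTo (Δ₁.sum + Δ₂.sum) then
      (structureConstant Δ₁ Δ₂ Δ₃ : ℚ) else 0) ?_, ?_, ?_, ?_⟩
  · intro Δ₃ h
    by_contra hΔ₃
    exact h (if_neg hΔ₃)
  · intro Δ₃
    rw [Finsupp.onFinset_apply]
    split_ifs
    · exact Nat.cast_nonneg _
    · exact le_rfl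
  · intro Δ₃ h
    exact mem_partitionsUpTo.1 (Finsupp.support_onFinset_subset h)
  · intro n
    rw [shiftedCentral_mul Δ₁ Δ₂ h₁ h₂]
    symm
    refine (Finset.sum_subset Finsupp.support_onFinset_subset fun Δ₃ _ h => ?_).trans
      (Finset.sum_congr rfl fun Δ₃ h => ?_)
    · rw [Finsupp.notMem_support_iff.1 h, Rat.cast_zero, zero_smul]
    · rw [Finsupp.onFinset_apply, if_pos h, Rat.cast_natCast]
end

section
/- Fix z ∈ ℂ. As ℂ-linear operators on the polynomial ring ℂ[p₁,p₂,p₃,…], the composition W((1)) ∘ W((2),z) equals 2·W((2),z) + W((2,1),z). -/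
/-!
`W1` is the Euler derivation `E` of `ℂ[p₁,p₂,…]` with `E p_a = a p_a`
(`W1_eq_eulerD`). Applying `E` to a summand of `W2 z f`, the Leibniz rule yields two parts.
When `E` hits the monomial in the `p`'s it multiplies the summand by the weight `a + b`;
writing `a + b = 2 + (a + b - 2)` produces `2 • W2 z f` and the two double sums of `W21 z f`.
When `E` passes to the derivatives of `f`, expanding it as `∑_c c p_c ∂_c` produces the two triple
sums of `W21 z f`, up to commuting partial derivatives (`pderiv_swap`) and reindexing.

The finsums are harmless: if `s = {1, …, N}` contains the variables of `f`, every summand involving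
a derivative of `f` with an index outside `s` vanishes, so each `∑ᶠ` is a sum over `s`.
-/

open MvPolynomial

/-- The coefficient cast `ℕ+ → ℂ`. -/
def cc (a : ℕ+) : ℂ := ((a : ℕ) : ℂ)

/-- The operator `W((1)) = ∑_a a·p_a·∂/∂p_a` on `ℂ[p₁,p₂,…]`
(the `p_a` are the variables `X a` of `MvPolynomial ℕ+ ℂ`; on any given polynomial
only finitely many summands are nonzero, and `∑ᶠ` denotes this finite sum). -/
noncomputable def W1 (f : MvPolynomial ℕ+ ℂ) : MvPolynomial ℕ+ ℂ :=
  ∑ᶠ a : ℕ+, cc a • (X a * pderiv a f)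

/-- The operator `W((1,1)) = (1/2)∑_a a(a-1)·p_a·∂/∂p_a
+ (1/2)∑_{a,b} ab·p_a p_b·∂²/(∂p_a∂p_b)`. -/
noncomputable def W11 (f : MvPolynomial ℕ+ ℂ) : MvPolynomial ℕ+ ℂ :=
  (1/2 : ℂ) • (∑ᶠ a : ℕ+, (cc a * (cc a - 1)) • (X a * pderiv a f))
  + (1/2 : ℂ) • (∑ᶠ a : ℕ+, ∑ᶠ b : ℕ+,
      (cc a * cc b) • (X a * X b * pderiv a (pderiv b f)))

/-- The operator `W((1,1,1)) = (1/6)∑_a a(a-1)(a-2)·p_a·∂/∂p_a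
+ (1/2)∑_{a,b} a(a-1)b·p_a p_b·∂²/(∂p_a∂p_b)
+ (1/6)∑_{a,b,c} abc·p_a p_b p_c·∂³/(∂p_a∂p_b∂p_c)`. -/
noncomputable def W111 (f : MvPolynomial ℕ+ ℂ) : MvPolynomial ℕ+ ℂ :=
  (1/6 : ℂ) • (∑ᶠ a : ℕ+, (cc a * (cc a - 1) * (cc a - 2)) • (X a * pderiv a f))
  + (1/2 : ℂ) • (∑ᶠ a : ℕ+, ∑ᶠ b : ℕ+,
      (cc a * (cc a - 1) * cc b) • (X a * X b * pderiv a (pderiv b f)))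
  + (1/6 : ℂ) • (∑ᶠ a : ℕ+, ∑ᶠ b : ℕ+, ∑ᶠ c : ℕ+,
      (cc a * cc b * cc c) • (X a * X b * X c * pderiv a (pderiv b (pderiv c f))))

/-- The operator `W((2),z) = (1/2)∑_{a,b}(a+b)·p_a p_b·∂/∂p_{a+b}
+ (z²/2)∑_{a,b} ab·p_{a+b}·∂²/(∂p_a∂p_b)`. -/
noncomputable def W2 (z : ℂ) (f : MvPolynomial ℕ+ ℂ) : MvPolynomial ℕ+ ℂ :=
  (1/2 : ℂ) • (∑ᶠ a : ℕ+, ∑ᶠ b : ℕ+,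
      (cc a + cc b) • (X a * X b * pderiv (a + b) f))
  + (z^2/2 : ℂ) • (∑ᶠ a : ℕ+, ∑ᶠ b : ℕ+,
      (cc a * cc b) • (X (a + b) * pderiv a (pderiv b f)))

/-- The operator `W((2,1),z) = (1/2)∑_{a,b}(a+b)(a+b-2)·p_a p_b·∂/∂p_{a+b}
+ (1/2)∑_{a,b,c}(a+b)c·p_a p_b p_c·∂²/(∂p_{a+b}∂p_c)
+ (z²/2)∑_{a,b,c} abc·p_a p_{b+c}·∂³/(∂p_a∂p_b∂p_c)
+ (z²/2)∑_{a,b} ab(a+b-2)·p_{a+b}·∂²/(∂p_a∂p_b)`. -/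
noncomputable def W21 (z : ℂ) (f : MvPolynomial ℕ+ ℂ) : MvPolynomial ℕ+ ℂ :=
  (1/2 : ℂ) • (∑ᶠ a : ℕ+, ∑ᶠ b : ℕ+,
      ((cc a + cc b) * (cc a + cc b - 2)) • (X a * X b * pderiv (a + b) f))
  + (1/2 : ℂ) • (∑ᶠ a : ℕ+, ∑ᶠ b : ℕ+, ∑ᶠ c : ℕ+,
      ((cc a + cc b) * cc c) • (X a * X b * X c * pderiv (a + b) (pderiv c f)))
  + (z^2/2 : ℂ) • (∑ᶠ a : ℕ+, ∑ᶠ b : ℕ+, ∑ᶠ c : ℕ+,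
      (cc a * cc b * cc c) • (X a * X (b + c) * pderiv a (pderiv b (pderiv c f))))
  + (z^2/2 : ℂ) • (∑ᶠ a : ℕ+, ∑ᶠ b : ℕ+,
      (cc a * cc b * (cc a + cc b - 2)) • (X (a + b) * pderiv a (pderiv b f)))

/-- Partial derivatives commute: their Lie bracket is a derivation killing every variable. -/
lemma pderiv_swap (a b : ℕ+) (f : MvPolynomial ℕ+ ℂ) :
    pderiv a (pderiv b f) = pderiv b (pderiv a f) := by
  have h : ⁅(pderiv a : Derivation ℂ (MvPolynomial ℕ+ ℂ) (MvPolynomial ℕ+ ℂ)),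
      (pderiv b : Derivation ℂ (MvPolynomial ℕ+ ℂ) (MvPolynomial ℕ+ ℂ))⁆ = 0 := by
    apply derivation_ext
    intro i
    rw [Derivation.commutator_apply]
    simp only [pderiv_X, Pi.single_apply]
    split_ifs <;> simp
  have h2 := congrArg (fun D : Derivation ℂ (MvPolynomial ℕ+ ℂ) (MvPolynomial ℕ+ ℂ) => D f) h
  simp only [Derivation.commutator_apply, Derivation.zero_apply] at h2
  exact sub_eq_zero.mp h2

/-- The Euler derivation of `ℂ[p₁,p₂,…]` for the grading in which `p_a` has weight `a`. -/
noncomputable def eulerD : Derivation ℂ (MvPolynomial ℕ+ ℂ) (MvPolynomial ℕ+ ℂ) :=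
  mkDerivation ℂ (fun a => cc a • X a)

lemma eulerD_X (a : ℕ+) : eulerD (X a) = cc a • (X a : MvPolynomial ℕ+ ℂ) :=
  mkDerivation_X _ _ _

lemma derivation_sum_apply (t : Finset ℕ+)
    (D : ℕ+ → Derivation ℂ (MvPolynomial ℕ+ ℂ) (MvPolynomial ℕ+ ℂ)) (g : MvPolynomial ℕ+ ℂ) :
    (∑ a ∈ t, D a) g = ∑ a ∈ t, D a g := by
  induction t using Finset.cons_induction with
  | empty => simp
  | cons a t ha ih => rw [Finset.sum_cons, Finset.sum_cons, Derivation.add_apply, ih]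

lemma finsum_eq_of_zero {M : Type*} [AddCommMonoid M] {s : Finset ℕ+} {g : ℕ+ → M}
    (h : ∀ a, a ∉ s → g a = 0) : ∑ᶠ a, g a = ∑ a ∈ s, g a := by
  apply finsum_eq_sum_of_support_subset
  intro a ha
  by_contra hs
  exact ha (h a hs)

lemma finsum2_eq_of_zero {M : Type*} [AddCommMonoid M] {s : Finset ℕ+} {g : ℕ+ → ℕ+ → M}
    (h : ∀ a b, a ∉ s ∨ b ∉ s → g a b = 0) :
    ∑ᶠ a, ∑ᶠ b, g a b = ∑ a ∈ s, ∑ b ∈ s, g a b := by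
  have h1 : ∀ a, ∑ᶠ b, g a b = ∑ b ∈ s, g a b := fun a =>
    finsum_eq_of_zero fun b hb => h a b (Or.inr hb)
  simp_rw [h1]
  exact finsum_eq_of_zero fun a ha => Finset.sum_eq_zero fun b _ => h a b (Or.inl ha)

lemma finsum3_eq_of_zero {M : Type*} [AddCommMonoid M] {s : Finset ℕ+} {g : ℕ+ → ℕ+ → ℕ+ → M}
    (h : ∀ a b c, a ∉ s ∨ b ∉ s ∨ c ∉ s → g a b c = 0) :
    ∑ᶠ a, ∑ᶠ b, ∑ᶠ c, g a b c = ∑ a ∈ s, ∑ b ∈ s, ∑ c ∈ s, g a b c := by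
  have h1 : ∀ a, ∑ᶠ b, ∑ᶠ c, g a b c = ∑ b ∈ s, ∑ c ∈ s, g a b c := fun a =>
    finsum2_eq_of_zero fun b c hb => h a b c (Or.inr hb)
  simp_rw [h1]
  exact finsum_eq_of_zero fun a ha =>
    Finset.sum_eq_zero fun b _ => Finset.sum_eq_zero fun c _ => h a b c (Or.inl ha)

/-- The Euler derivation as a finite sum, over any index set outside which the partial derivatives
of `g` vanish. -/
lemma eulerD_eq_sum {s : Finset ℕ+} {g : MvPolynomial ℕ+ ℂ} (h : ∀ a, a ∉ s → pderiv a g = 0) :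
    eulerD g = ∑ a ∈ s, cc a • (X a * pderiv a g) := by
  classical
  -- On the larger set `s ∪ g.vars` both sides are derivations agreeing on the variables of `g`.
  have h1 : eulerD g = (∑ a ∈ s ∪ g.vars, (cc a • (X a : MvPolynomial ℕ+ ℂ)) •
      (pderiv a : Derivation ℂ (MvPolynomial ℕ+ ℂ) (MvPolynomial ℕ+ ℂ))) g := by
    apply derivation_eq_of_forall_mem_vars
    intro i hi
    rw [eulerD_X, derivation_sum_apply,
      Finset.sum_eq_single_of_mem i (Finset.mem_union_right _ hi)]
    · simp
    · intro b _ hb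
      simp [pderiv_X_of_ne hb.symm]
  rw [h1, derivation_sum_apply]
  symm
  rw [Finset.sum_subset (Finset.subset_union_left : s ⊆ s ∪ g.vars)]
  · simp
  · intro a _ ha
    simp [h a ha]

lemma W1_eq_eulerD (g : MvPolynomial ℕ+ ℂ) : W1 g = eulerD g := by
  have h : ∀ a, a ∉ g.vars → pderiv a g = 0 := fun a ha => pderiv_eq_zero_of_notMem_vars ha
  rw [eulerD_eq_sum h, W1]
  exact finsum_eq_of_zero fun a ha => by simp [h a ha]

/-- as operators on `ℂ[p₁,p₂,…]`, `W((1)) ∘ W((2),z) = 2·W((2),z) + W((2,1),z)`. -/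
theorem W1_comp_W2 (z : ℂ) (f : MvPolynomial ℕ+ ℂ) :
    W1 (W2 z f) = (2 : ℂ) • W2 z f + W21 z f := by
  classical
  -- An initial segment of `ℕ+`, so that `a ∉ s` forces `a + b ∉ s`.
  obtain ⟨N, hN⟩ : ∃ N : ℕ+, ∀ a, a ∉ Finset.Iic N → pderiv a f = 0 := by
    obtain ⟨N, hN⟩ := f.vars.bddAbove
    refine ⟨N, fun a ha => pderiv_eq_zero_of_notMem_vars fun hv => ha ?_⟩
    exact Finset.mem_Iic.mpr (hN hv)
  set s := Finset.Iic N with hs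
  have hadd : ∀ a b, a ∉ s ∨ b ∉ s → pderiv (a + b) f = 0 := by
    intro a b hab
    apply hN
    simp only [hs, Finset.mem_Iic, not_le, ← PNat.coe_lt_coe, PNat.add_coe] at hab ⊢
    omega
  have h2 : ∀ a b, a ∉ s ∨ b ∉ s → pderiv a (pderiv b f) = 0 := by
    rintro a b (h | h)
    · rw [pderiv_swap, hN a h, map_zero]
    · rw [hN b h, map_zero]
  have hadd2 : ∀ a b c, a ∉ s ∨ b ∉ s ∨ c ∉ s → pderiv (a + b) (pderiv c f) = 0 := by
    intro a b c h
    by_cases hc : c ∈ s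
    · rw [pderiv_swap, hadd a b (by tauto), map_zero]
    · rw [hN c hc, map_zero]
  have h3 : ∀ a b c, a ∉ s ∨ b ∉ s ∨ c ∉ s → pderiv a (pderiv b (pderiv c f)) = 0 := by
    rintro a b c (h | h)
    · rw [pderiv_swap, h2 a c (Or.inl h), map_zero]
    · rw [h2 b c h, map_zero]
  -- `E` on the cut terms `p_a p_b ∂_{a+b}` of `W2`.
  have hA : eulerD (∑ a ∈ s, ∑ b ∈ s, (cc a + cc b) • (X a * X b * pderiv (a + b) f))
      = (2 : ℂ) • (∑ a ∈ s, ∑ b ∈ s, (cc a + cc b) • (X a * X b * pderiv (a + b) f))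
      + (∑ a ∈ s, ∑ b ∈ s,
          ((cc a + cc b) * (cc a + cc b - 2)) • (X a * X b * pderiv (a + b) f))
      + (∑ a ∈ s, ∑ b ∈ s, ∑ c ∈ s,
          ((cc a + cc b) * cc c) • (X a * X b * X c * pderiv (a + b) (pderiv c f))) := by
    simp only [map_sum, Finset.smul_sum, ← Finset.sum_add_distrib]
    refine Finset.sum_congr rfl fun a _ => Finset.sum_congr rfl fun b _ => ?_
    have hE : eulerD (pderiv (a + b) f)
        = ∑ c ∈ s, cc c • (X c * pderiv (a + b) (pderiv c f)) := by
      rw [eulerD_eq_sum fun c hc => h2 c (a + b) (Or.inl hc)]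
      exact Finset.sum_congr rfl fun c _ => by rw [pderiv_swap]
    have hT : ∑ c ∈ s, ((cc a + cc b) * cc c) • (X a * X b * X c * pderiv (a + b) (pderiv c f))
        = (cc a + cc b) • (X a * X b * eulerD (pderiv (a + b) f)) := by
      rw [hE, Finset.mul_sum, Finset.smul_sum]
      refine Finset.sum_congr rfl fun c _ => ?_
      simp only [smul_eq_C_mul, map_mul]
      ring
    rw [hT]
    simp only [Derivation.leibniz, eulerD_X, smul_eq_mul, smul_eq_C_mul, derivation_C, map_mul,
      map_add, map_sub]
    ring
  -- `E` on the join terms `p_{a+b} ∂_a ∂_b` of `W2`.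
  have hB : eulerD (∑ a ∈ s, ∑ b ∈ s, (cc a * cc b) • (X (a + b) * pderiv a (pderiv b f)))
      = (2 : ℂ) • (∑ a ∈ s, ∑ b ∈ s, (cc a * cc b) • (X (a + b) * pderiv a (pderiv b f)))
      + (∑ a ∈ s, ∑ b ∈ s, ∑ c ∈ s,
          (cc a * cc b * cc c) • (X a * X (b + c) * pderiv a (pderiv b (pderiv c f))))
      + (∑ a ∈ s, ∑ b ∈ s,
          (cc a * cc b * (cc a + cc b - 2)) • (X (a + b) * pderiv a (pderiv b f))) := by
    -- In the triple sum the index coming from `E` is moved innermost.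
    rw [Finset.sum_comm (f := fun a b => ∑ c ∈ s,
      (cc a * cc b * cc c) • (X a * X (b + c) * pderiv a (pderiv b (pderiv c f))))]
    rw [Finset.sum_congr rfl fun b _ => Finset.sum_comm]
    simp only [map_sum, Finset.smul_sum, ← Finset.sum_add_distrib]
    refine Finset.sum_congr rfl fun a _ => Finset.sum_congr rfl fun b _ => ?_
    have hT : ∑ c ∈ s,
          (cc c * cc a * cc b) • (X c * X (a + b) * pderiv c (pderiv a (pderiv b f)))
        = (cc a * cc b) • (X (a + b) * eulerD (pderiv a (pderiv b f))) := by
      rw [eulerD_eq_sum fun c hc => h3 c a b (Or.inl hc), Finset.mul_sum, Finset.smul_sum]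
      refine Finset.sum_congr rfl fun c _ => ?_
      simp only [smul_eq_C_mul, map_mul]
      ring
    rw [hT]
    have hc : cc (a + b) = cc a + cc b := by simp [cc]
    simp only [Derivation.leibniz, eulerD_X, smul_eq_mul, smul_eq_C_mul, derivation_C, map_mul,
      map_add, map_sub, hc]
    ring
  rw [W1_eq_eulerD, W2, W21,
    finsum2_eq_of_zero (s := s) (g := fun a b => (cc a + cc b) • (X a * X b * pderiv (a + b) f))
      fun a b h => by simp [hadd a b h],
    finsum2_eq_of_zero (s := s)
      (g := fun a b => (cc a * cc b) • (X (a + b) * pderiv a (pderiv b f)))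
      fun a b h => by simp [h2 a b h],
    finsum2_eq_of_zero (s := s) (g := fun a b =>
      ((cc a + cc b) * (cc a + cc b - 2)) • (X a * X b * pderiv (a + b) f))
      fun a b h => by simp [hadd a b h],
    finsum3_eq_of_zero (s := s) (g := fun a b c =>
      ((cc a + cc b) * cc c) • (X a * X b * X c * pderiv (a + b) (pderiv c f)))
      fun a b c h => by simp [hadd2 a b c h],
    finsum3_eq_of_zero (s := s) (g := fun a b c =>
      (cc a * cc b * cc c) • (X a * X (b + c) * pderiv a (pderiv b (pderiv c f))))
      fun a b c h => by simp [h3 a b c h],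
    finsum2_eq_of_zero (s := s) (g := fun a b =>
      (cc a * cc b * (cc a + cc b - 2)) • (X (a + b) * pderiv a (pderiv b f)))
      fun a b h => by simp [h2 a b h],
    map_add, Derivation.map_smul, Derivation.map_smul, hA, hB]
  module
end
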